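/- Let F be a perfect field, let g ∈ GL_n(F) with g ≠ 1 be of finite order, and suppose the semisimple part g_s of g is diagonalizable over F with eigenvalues ζ^{k_1}, …, ζ^{k_n}, where ζ ∈ F is a primitive k-th root of unity and k is the order of g_s. Define k_g := min{ a_1 + ⋯ + a_n : a_i ∈ ℕ, a_1 + ⋯ + a_n > 0, a_1 k_1 + ⋯ + a_n k_n ≡ 0 (mod k) }. Then M_{⟨g⟩} = k_g. In particular, if G is a finite subgroup of GL_n(F) containing g, then k_g ≤ M_G, i.e. every nonzero homogeneous G-invariant polynomial of positive degree d satisfies d ≥ k_g. -/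

import Mathlib

open MvPolynomial Matrix

/-- The action of `g ∈ GL_n(F)` on polynomials: `(g · f)(v) = f(g⁻¹ v)`. -/
noncomputable def glAct {n : ℕ} {F : Type} [Field F] (g : GL (Fin n) F)
    (f : MvPolynomial (Fin n) F) : MvPolynomial (Fin n) F :=
  aeval (fun i => ∑ j, ((g⁻¹ : GL (Fin n) F) : Matrix (Fin n) (Fin n) F) i j • X j) f

lemma glAct_mul' {n : ℕ} {F : Type} [Field F] (g h : GL (Fin n) F)
    (f : MvPolynomial (Fin n) F) : glAct (g * h) f = glAct g (glAct h f) := by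
  unfold glAct
  rw [← AlgHom.comp_apply]
  congr 1
  apply MvPolynomial.algHom_ext
  intro i
  simp only [AlgHom.comp_apply, aeval_X, map_sum, map_smul, _root_.mul_inv_rev, Units.val_mul,
    Matrix.mul_apply, Finset.sum_smul, Finset.smul_sum, smul_smul]
  rw [Finset.sum_comm]

lemma glAct_one' {n : ℕ} {F : Type} [Field F]
    (f : MvPolynomial (Fin n) F) : glAct (1 : GL (Fin n) F) f = f := by
  unfold glAct
  have : (aeval (fun i => ∑ j, (((1 : GL (Fin n) F)⁻¹ : GL (Fin n) F) :
      Matrix (Fin n) (Fin n) F) i j • X j) : MvPolynomial (Fin n) F →ₐ[F] MvPolynomial (Fin n) F)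
      = AlgHom.id F _ := by
    apply MvPolynomial.algHom_ext
    intro i
    simp [Matrix.one_apply, ite_smul]
  rw [this]; rfl

lemma glAct_homog {n : ℕ} {F : Type} [Field F] (g : GL (Fin n) F)
    {f : MvPolynomial (Fin n) F} {d : ℕ} (hf : f.IsHomogeneous d) :
    (glAct g f).IsHomogeneous d := by
  unfold glAct
  have := hf.aeval (fun i => ∑ j, ((g⁻¹ : GL (Fin n) F) : Matrix (Fin n) (Fin n) F) i j •
      (X j : MvPolynomial (Fin n) F)) (n := 1) (fun i => by
      apply IsHomogeneous.sum
      intro j _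
      rw [smul_eq_C_mul]
      simpa using (isHomogeneous_C (Fin n) _).mul (isHomogeneous_X F j))
  simpa using this

lemma glAct_ne {n : ℕ} {F : Type} [Field F] (g : GL (Fin n) F)
    {f : MvPolynomial (Fin n) F} (hf : f ≠ 0) : glAct g f ≠ 0 := by
  intro h
  apply hf
  rw [← glAct_one' f, ← inv_mul_cancel g, glAct_mul', h]
  simp [glAct]

lemma glAct_fix_closure {n : ℕ} {F : Type} [Field F] {S : Set (GL (Fin n) F)}
    {f : MvPolynomial (Fin n) F} (hf : ∀ g ∈ S, glAct g f = f) (x : GL (Fin n) F)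
    (hx : x ∈ Subgroup.closure S) : glAct x f = f := by
  induction hx using Subgroup.closure_induction with
  | mem x hx => exact hf x hx
  | one => exact glAct_one' f
  | mul x y _ _ h1 h2 => rw [glAct_mul', h2, h1]
  | inv x _ h => rw [← h, ← glAct_mul', inv_mul_cancel, glAct_one', h]

lemma coeff_diag {n : ℕ} {F : Type} [Field F] (c : Fin n → F) (D : GL (Fin n) F)
    (hD : (D : Matrix (Fin n) (Fin n) F) = diagonal c)
    (f : MvPolynomial (Fin n) F) (a : Fin n →₀ ℕ) :
    coeff a (glAct D⁻¹ f) = (∏ i, c i ^ a i) * coeff a f := by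
  unfold glAct
  rw [inv_inv, hD]
  have h1 : (fun i => ∑ j, (diagonal c) i j • (X j : MvPolynomial (Fin n) F)) =
      fun i => C (c i) * X i := by
    funext i
    simp [diagonal_apply, ite_smul, smul_eq_C_mul]
  rw [h1]
  induction f using MvPolynomial.induction_on' with
  | monomial u r =>
    rw [aeval_monomial, Finsupp.prod_fintype _ _ (by simp)]
    simp only [mul_pow, Finset.prod_mul_distrib, ← C_pow, ← map_prod, algebraMap_eq]
    have : (∏ i, (X i : MvPolynomial (Fin n) F) ^ u i) = monomial u 1 := by
      rw [monomial_eq, Finsupp.prod_fintype _ _ (by simp)]; simp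
    rw [this, C_mul_monomial, C_mul_monomial, coeff_monomial, coeff_monomial]
    split_ifs with h
    · subst h; ring
    · simp
  | add p q hp hq => rw [map_add, coeff_add, hp, hq, coeff_add, mul_add]

/-- A unipotent matrix of finite order has order a power of the exponential characteristic. -/
lemma unip_pow {n : ℕ} {F : Type} [Field F] (p : ℕ) [ExpChar F p] (gu : GL (Fin n) F)
    (huni : IsNilpotent ((gu : Matrix (Fin n) (Fin n) F) - 1)) (hfin : IsOfFinOrder gu) :
    ∃ m, gu ^ p ^ m = 1 := by
  rcases ‹ExpChar F p› with _ | hprime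
  · refine ⟨0, ?_⟩
    obtain ⟨N, hN, h⟩ := isOfFinOrder_iff_pow_eq_one.1 hfin
    set u : Matrix (Fin n) (Fin n) F := (gu : Matrix (Fin n) (Fin n) F) with hu
    have hN1 : u ^ N = 1 := by rw [hu, ← Units.val_pow_eq_pow_val, h]; rfl
    have hgeom := mul_geom_sum u N
    rw [hN1, sub_self] at hgeom
    have hunit : IsUnit (∑ i ∈ Finset.range N, u ^ i) := by
      have e : (∑ i ∈ Finset.range N, u ^ i) =
          (N : Matrix (Fin n) (Fin n) F) + ∑ i ∈ Finset.range N, (u ^ i - 1) := by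
        simp
      rw [e]
      have hNu : IsUnit (N : Matrix (Fin n) (Fin n) F) := by
        have : (N : Matrix (Fin n) (Fin n) F) = algebraMap F _ (N : F) := by simp
        rw [this]
        exact (IsUnit.mk0 _ (Nat.cast_ne_zero.2 hN.ne')).map _
      have hnil : IsNilpotent (∑ i ∈ Finset.range N, (u ^ i - 1)) := by
        have : (∑ i ∈ Finset.range N, (u ^ i - 1)) =
            (u - 1) * ∑ i ∈ Finset.range N, ∑ j ∈ Finset.range i, u ^ j := by
          rw [Finset.mul_sum]
          exact Finset.sum_congr rfl fun i _ => (mul_geom_sum u i).symm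
        rw [this]
        refine Commute.isNilpotent_mul_right ?_ huni
        refine Commute.sum_right _ _ _ fun i _ => Commute.sum_right _ _ _ fun j _ => ?_
        exact ((Commute.refl u).sub_left (Commute.one_left u)).pow_right j
      exact hnil.isUnit_add_left_of_commute hNu (Nat.commute_cast _ _)
    have h0 : u - 1 = 0 := by
      rcases hunit with ⟨v, hv⟩
      rw [← hv] at hgeom
      exact (Units.mul_left_eq_zero v).1 hgeom
    simp only [pow_zero, pow_one]
    ext1
    exact sub_eq_zero.1 h0
  · obtain ⟨r, hr⟩ := huni
    have := Fact.mk hprime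
    rcases Nat.eq_zero_or_pos n with hn | hn
    · subst hn
      exact ⟨0, Subsingleton.elim _ _⟩
    have : Nonempty (Fin n) := ⟨⟨0, hn⟩⟩
    have : CharP (Matrix (Fin n) (Fin n) F) p := inferInstance
    refine ⟨r, ?_⟩
    have h1 := sub_pow_char_pow_of_commute (p := p) (n := r)
      (Commute.one_right (gu : Matrix (Fin n) (Fin n) F))
    have h2 : ((gu : Matrix (Fin n) (Fin n) F) - 1) ^ p ^ r = 0 :=
      pow_eq_zero_of_le (Nat.lt_pow_self hprime.one_lt).le hr
    rw [h2, one_pow] at h1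
    ext1
    rw [Units.val_pow_eq_pow_val]
    exact sub_eq_zero.1 h1.symm

lemma gs_fin {n : ℕ} {F : Type} [Field F]
    (g gs gu P D : GL (Fin n) F) (hgfin : IsOfFinOrder g)
    (hdecomp : g = gs * gu)
    (hcomm : gs * gu = gu * gs)
    (huni : IsNilpotent ((gu : Matrix (Fin n) (Fin n) F) - 1))
    (c : Fin n → F) (hD : (D : Matrix (Fin n) (Fin n) F) = diagonal c)
    (hP : gs = P * D * P⁻¹) : IsOfFinOrder gs := by
  obtain ⟨N, hN, h⟩ := isOfFinOrder_iff_pow_eq_one.1 hgfin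
  rw [isOfFinOrder_iff_pow_eq_one]
  refine ⟨N, hN, ?_⟩
  have hc : Commute gs gu := hcomm
  rw [hdecomp, hc.mul_pow] at h
  have h' : gu ^ N = P * (D ^ N)⁻¹ * P⁻¹ := by
    rw [← inv_eq_of_mul_eq_one_right h, hP, conj_pow]; group
  have h2 : P⁻¹ * gu ^ N * P = (D ^ N)⁻¹ := by rw [h']; group
  have hnil : IsNilpotent ((gu : Matrix (Fin n) (Fin n) F) ^ N - 1) := by
    rw [← mul_geom_sum]
    refine Commute.isNilpotent_mul_right ?_ huni
    refine Commute.sum_right _ _ _ fun j _ => ?_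
    exact ((Commute.refl _).sub_left (Commute.one_left _)).pow_right j
  have hnil2 : IsNilpotent ((D : Matrix (Fin n) (Fin n) F) ^ N - 1) := by
    have e : (D : Matrix (Fin n) (Fin n) F) ^ N - 1 =
        -((P⁻¹ : GL (Fin n) F) * (((gu : Matrix (Fin n) (Fin n) F) ^ N - 1)) * P *
          (D : Matrix (Fin n) (Fin n) F) ^ N) := by
      have h3 : ((P⁻¹ : GL (Fin n) F) : Matrix (Fin n) (Fin n) F) * (gu : Matrix (Fin n) (Fin n) F) ^ N * P * (D : Matrix (Fin n) (Fin n) F) ^ N = 1 := by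
        have : P⁻¹ * gu ^ N * P * D ^ N = 1 := by rw [h2]; group
        have := congrArg (Units.val) this
        simpa only [Units.val_mul, Units.val_pow_eq_pow_val, Units.val_one] using this
      rw [mul_sub, sub_mul, sub_mul, h3, mul_one, Units.inv_mul, one_mul]
      abel
    have hconj : IsNilpotent (((P⁻¹ : GL (Fin n) F) : Matrix (Fin n) (Fin n) F) *
        (((gu : Matrix (Fin n) (Fin n) F) ^ N - 1)) * P) := by
      obtain ⟨r, hr⟩ := hnil
      refine ⟨r, ?_⟩
      rw [Units.conj_pow' P, hr]; simp
    rw [e, isNilpotent_neg_iff]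
    refine Commute.isNilpotent_mul_right ?_ hconj
    have h4 : ((P⁻¹ : GL (Fin n) F) : Matrix (Fin n) (Fin n) F) *
        (((gu : Matrix (Fin n) (Fin n) F) ^ N - 1)) * P = (((D ^ N)⁻¹ : GL (Fin n) F) : Matrix (Fin n) (Fin n) F) - 1 := by
      rw [← h2]
      rw [mul_sub, sub_mul, mul_one, Units.inv_mul]
      simp only [Units.val_mul, Units.val_pow_eq_pow_val]
    rw [h4, ← Units.val_pow_eq_pow_val]
    refine Commute.sub_left ?_ (Commute.one_left _)
    exact (Commute.refl (D ^ N)).inv_left.units_val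
  have hDN : D ^ N = 1 := by
    obtain ⟨r, hr⟩ := hnil2
    ext1
    rw [Units.val_pow_eq_pow_val, Units.val_one]
    rw [hD, diagonal_pow, ← diagonal_one, diagonal_sub, diagonal_pow, ← diagonal_zero] at *
    have := diagonal_injective hr
    congr 1
    funext i
    have hi := congrFun this i
    simp only [Pi.pow_apply] at hi
    exact sub_eq_zero.1 (eq_zero_of_pow_eq_zero hi)
  rw [hP, conj_pow, hDN]; group

lemma unip_fix {n : ℕ} {F : Type} [Field F] (p m : ℕ) [ExpChar F p] (gs gu : GL (Fin n) F)
    (hgu : gu ^ p ^ m = 1) (hcomm : gs * gu = gu * gs) (d : ℕ)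
    (w : MvPolynomial (Fin n) F) (hw : w ≠ 0) (hd : w.IsHomogeneous d) (hs : glAct gs w = w) :
    ∃ f : MvPolynomial (Fin n) F, f ≠ 0 ∧ f.IsHomogeneous d ∧ glAct gs f = f ∧ glAct gu f = f := by
  let T : Module.End F (MvPolynomial (Fin n) F) :=
    (aeval (fun i => ∑ j, ((gu⁻¹ : GL (Fin n) F) : Matrix (Fin n) (Fin n) F) i j • X j) :
      MvPolynomial (Fin n) F →ₐ[F] MvPolynomial (Fin n) F).toLinearMap
  have hT : ∀ f, T f = glAct gu f := fun f => rfl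
  have hTp : ∀ (r : ℕ) f, (T ^ r) f = glAct (gu ^ r) f := by
    intro r
    induction r with
    | zero => intro f; simp [glAct_one']
    | succ r ih => intro f; rw [pow_succ, pow_succ, Module.End.mul_apply, ih, hT, glAct_mul']
  have hTq : T ^ p ^ m = 1 := by
    refine LinearMap.ext fun f => ?_
    rw [hTp, hgu, glAct_one']; rfl
  have : ExpChar (Module.End F (MvPolynomial (Fin n) F)) p :=
    expChar_of_injective_algebraMap (FaithfulSMul.algebraMap_injective F _) p
  have hnil : (T - 1) ^ p ^ m = 0 := by
    rw [sub_pow_expChar_pow_of_commute _ _ (Commute.one_right T), hTq, one_pow, sub_self]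
  have hex : ∃ j : ℕ, ((T - 1) ^ j) w = 0 := ⟨p ^ m, by rw [hnil]; rfl⟩
  classical
  have hmin := Nat.find_spec hex
  have hlt := fun j => @Nat.find_min _ _ hex j
  rcases hj : Nat.find hex with _ | j
  · rw [hj] at hmin; exact absurd hmin (by simpa using hw)
  rw [hj] at hmin hlt
  have hinv : ∀ i : ℕ, (((T - 1) ^ i) w).IsHomogeneous d ∧ glAct gs (((T - 1) ^ i) w) = ((T - 1) ^ i) w := by
    intro i
    induction i with
    | zero => exact ⟨by simpa using hd, by simpa using hs⟩
    | succ i ih =>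
      rw [pow_succ', Module.End.mul_apply, LinearMap.sub_apply, hT, Module.End.one_apply]
      refine ⟨(glAct_homog gu ih.1).sub ih.1, ?_⟩
      have hsub : ∀ a b, glAct gs (a - b) = glAct gs a - glAct gs b := by
        intro a b; simp [glAct]
      rw [hsub, ← glAct_mul', hcomm, glAct_mul', ih.2]
  refine ⟨((T - 1) ^ j) w, hlt j (Nat.lt_succ_self j), (hinv j).1, (hinv j).2, ?_⟩
  rw [pow_succ', Module.End.mul_apply, LinearMap.sub_apply, hT, Module.End.one_apply] at hmin
  exact sub_eq_zero.1 hmin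

/-- Let `g ≠ 1` be of finite order in `GL_n(F)` (`F` perfect) with Jordan decomposition
`g = g_s g_u`, where the semisimple part `g_s` is diagonalizable over `F` with eigenvalues
`ζ^{k_1}, …, ζ^{k_n}` (`ζ` a primitive `k`-th root of unity, `k = ord(g_s)`).  Then
`M_{⟨g⟩} = k_g := min{∑ a_i > 0 : ∑ a_i k_i ≡ 0 (mod k)}`, and `k_g ≤ M_G` for every
finite subgroup `G` containing `g`. -/
theorem stmt4 {n k : ℕ} {F : Type} [Field F] [PerfectField F]
    (g gs gu : GL (Fin n) F) (hg1 : g ≠ 1) (hgfin : IsOfFinOrder g)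
    (hdecomp : g = gs * gu)
    (hcomm : gs * gu = gu * gs)
    (huni : IsNilpotent ((gu : Matrix (Fin n) (Fin n) F) - 1))
    (ζ : F) (hζ : IsPrimitiveRoot ζ k) (hk : orderOf gs = k)
    (kv : Fin n → ℕ)
    (hdiag : ∃ P : GL (Fin n) F,
      (gs : Matrix (Fin n) (Fin n) F) =
        (P : Matrix (Fin n) (Fin n) F) * diagonal (fun i => ζ ^ kv i) *
          ((P⁻¹ : GL (Fin n) F) : Matrix (Fin n) (Fin n) F)) :
    IsLeast {d : ℕ | 0 < d ∧ ∃ f : MvPolynomial (Fin n) F, f ≠ 0 ∧ f.IsHomogeneous d ∧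
        ∀ x ∈ Subgroup.closure {g}, glAct x f = f}
      (sInf {d : ℕ | 0 < d ∧ ∃ a : Fin n → ℕ, (∑ i, a i) = d ∧ k ∣ ∑ i, a i * kv i}) ∧
    ∀ G : Subgroup (GL (Fin n) F), (G : Set (GL (Fin n) F)).Finite → g ∈ G →
      ∀ d : ℕ, 0 < d →
        ∀ f : MvPolynomial (Fin n) F, f ≠ 0 → f.IsHomogeneous d →
          (∀ x ∈ G, glAct x f = f) →
          sInf {d : ℕ | 0 < d ∧ ∃ a : Fin n → ℕ, (∑ i, a i) = d ∧ k ∣ ∑ i, a i * kv i} ≤ d := by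
  obtain ⟨P, hP⟩ := hdiag
  have hn : 0 < n := by
    rcases Nat.eq_zero_or_pos n with h | h
    · subst h; exact absurd (Subsingleton.elim _ _) hg1
    · exact h
  obtain ⟨D, hDdef⟩ : ∃ D, D = P⁻¹ * gs * P := ⟨_, rfl⟩
  have hP' : gs = P * D * P⁻¹ := by rw [hDdef]; group
  have hD : (D : Matrix (Fin n) (Fin n) F) = diagonal (fun i => ζ ^ kv i) := by
    rw [hDdef, Units.val_mul, Units.val_mul, hP]
    simp only [mul_assoc, Units.inv_mul, mul_one]
    rw [← mul_assoc, Units.inv_mul, one_mul]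
  have hsfin := gs_fin g gs gu P D hgfin hdecomp hcomm huni _ hD hP'
  have hc : Commute gs gu := hcomm
  have hufin : IsOfFinOrder gu := by
    have : gu = gs⁻¹ * g := by rw [hdecomp]; group
    rw [this]
    refine Commute.isOfFinOrder_mul ?_ hsfin.inv hgfin
    rw [hdecomp]
    exact ((Commute.refl gs).mul_right hc).inv_left
  have hkpos : 0 < k := hk ▸ hsfin.orderOf_pos
  obtain ⟨p, hp⟩ := ExpChar.exists F
  obtain ⟨m, hm⟩ := unip_pow p gu huni hufin
  have hcop : Nat.Coprime (p ^ m) k := by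
    apply Nat.Coprime.pow_left
    rcases hp with _ | hprime
    · exact Nat.coprime_one_left k
    · have := Fact.mk hprime
      rw [hprime.coprime_iff_not_dvd]
      intro hdvd
      have : NeZero k := ⟨hkpos.ne'⟩
      have := hζ.neZero'
      exact this.1 ((CharP.cast_eq_zero_iff F p k).2 hdvd)
  have hgsmem : gs ∈ Subgroup.closure {g} := by
    have h1 : g ^ p ^ m = gs ^ p ^ m := by rw [hdecomp, hc.mul_pow, hm, mul_one]
    obtain ⟨r, hr⟩ := exists_pow_eq_self_of_coprime (x := gs) (n := p ^ m) (by rw [hk]; exact hcop)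
    rw [← h1] at hr
    have hgm : g ∈ Subgroup.closure {g} := Subgroup.subset_closure (Set.mem_singleton g)
    have h2 := Subgroup.pow_mem _ (Subgroup.pow_mem _ hgm (p ^ m)) r
    rw [hr] at h2
    exact h2
  have hprod : ∀ a : Fin n → ℕ, ∏ i, (ζ ^ kv i) ^ a i = ζ ^ ∑ i, a i * kv i := by
    intro a
    rw [← Finset.prod_pow_eq_pow_sum]
    exact Finset.prod_congr rfl fun i _ => by rw [← pow_mul, mul_comm]
  set S := {d : ℕ | 0 < d ∧ ∃ a : Fin n → ℕ, (∑ i, a i) = d ∧ k ∣ ∑ i, a i * kv i} with hS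
  have lower : ∀ d : ℕ, 0 < d → ∀ f : MvPolynomial (Fin n) F, f ≠ 0 → f.IsHomogeneous d →
      glAct gs f = f → sInf S ≤ d := by
    intro d hd f hf hhom hfix
    apply Nat.sInf_le
    have hh0 := glAct_ne P⁻¹ hf
    have hhh := glAct_homog P⁻¹ hhom
    have hDfix : glAct D⁻¹ (glAct P⁻¹ f) = glAct P⁻¹ f := by
      rw [← glAct_mul']
      conv_lhs => rw [← hfix]
      rw [← glAct_mul', hDdef]
      congr 1; group
    obtain ⟨a, ha⟩ := MvPolynomial.exists_coeff_ne_zero hh0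
    refine ⟨hd, a, ?_, ?_⟩
    · have := hhh ha
      rw [← this, Finsupp.weight_apply, Finsupp.sum_fintype _ _ (by simp)]
      simp
    · have := coeff_diag _ D hD (glAct P⁻¹ f) a
      rw [hDfix, hprod] at this
      exact hζ.dvd_of_pow_eq_one _ (mul_right_cancel₀ ha (by rw [one_mul]; exact this.symm))
  have hne : S.Nonempty := by
    refine ⟨k, hkpos, Pi.single ⟨0, hn⟩ k, by simp, ?_⟩
    apply Finset.dvd_sum
    intro i _
    by_cases h : i = ⟨0, hn⟩
    · subst h; simp
    · simp [h]
  refine ⟨⟨?_, ?_⟩, ?_⟩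
  · obtain ⟨hpos, a, ha, hdvd⟩ := Nat.sInf_mem hne
    refine ⟨hpos, ?_⟩
    let b : Fin n →₀ ℕ := Finsupp.equivFunOnFinite.symm a
    have hmon : glAct D⁻¹ (monomial b (1 : F)) = monomial b 1 := by
      ext e
      rw [coeff_diag _ D hD, hprod, coeff_monomial]
      split_ifs with h
      · subst h
        rw [mul_one, hζ.pow_eq_one_iff_dvd]
        exact hdvd
      · simp
    have hDmon : glAct D (monomial b (1 : F)) = monomial b 1 := by
      conv_lhs => rw [← hmon]
      rw [← glAct_mul', mul_inv_cancel, glAct_one']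
    have hbh : (monomial b (1 : F)).IsHomogeneous (sInf S) := by
      apply isHomogeneous_monomial
      rw [Finsupp.degree_eq_sum]
      exact ha
    obtain ⟨f, hf0, hfh, hfs, hfu⟩ := unip_fix p m gs gu hm hcomm (sInf S)
      (glAct P (monomial b 1)) (glAct_ne P (by simp)) (glAct_homog P hbh) (by
        rw [← glAct_mul', hP', inv_mul_cancel_right, glAct_mul', hDmon])
    refine ⟨f, hf0, hfh, glAct_fix_closure ?_⟩
    rintro x rfl
    rw [hdecomp, glAct_mul', hfu, hfs]
  · rintro d ⟨hd, f, hf, hh, hfix⟩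
    exact lower d hd f hf hh (hfix gs hgsmem)
  · intro G _ hgG d hd f hf hh hfix
    refine lower d hd f hf hh (hfix gs ?_)
    exact (Subgroup.closure_le G).2 (by simpa using hgG) hgsmem
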